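/- The Koszul complex of global sections over U × U is a resolution of O(U) via restriction to the diagonal: (i) for 1 ≤ q ≤ n, every ω ∈ K^{−q} with d_K ω = 0 satisfies ω = d_K(P ω); (ii) an element f ∈ K^0 lies in the image of d_K : K^{−1} → K^0 if and only if f(z, z) = 0 for all z ∈ U; (iii) the augmentation K^0 → O(U), f ↦ (z ↦ f(z, z)), is surjective. -/

import Mathlib

/-!
Setting: `n ≥ 1`, `U ⊆ ℂⁿ` a nonempty convex open set.  Points of `U × U` are
written `p = (z, ζ)` with `z = p.1`, `ζ = p.2`.  For `0 ≤ q ≤ n`,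
`K^{-q} = Λ^q(ℂⁿ) ⊗ O(U×U)` is encoded by the coefficients of its elements on
the basis `e^I`, where the strictly increasing multi-indices
`I = (i₁ < … < i_q)` are encoded as finsets `I ⊆ Fin n` of cardinality `q`.
-/

open scoped BigOperators

namespace TwistedKoszul

variable (n : ℕ)

/-- Points of `ℂⁿ × ℂⁿ`. -/
abbrev Pt (n : ℕ) := (Fin n → ℂ) × (Fin n → ℂ)

/-- A family of coefficients, indexed by the basis vectors `e^I` of the
exterior algebra `Λ^•(ℂⁿ)` (strictly increasing multi-indices `I`, encoded as
finsets).  An element of `K^{-q}` is such a family supported on finsets of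
cardinality `q`, with holomorphic coefficients (see `MemK`). -/
abbrev Coeff (n : ℕ) := Finset (Fin n) → Pt n → ℂ

/-- The sign `(-1)^{#{i ∈ I | i < j}}`, so that `e^j ∧ e^I = sgn j I • e^{I ∪ {j}}`
for `j ∉ I`. -/
noncomputable def sgn (j : Fin n) (I : Finset (Fin n)) : ℂ :=
  (-1 : ℂ) ^ (I.filter (fun i => i < j)).card

/-- The holomorphic partial derivative `∂f/∂z^j` in the `j`-th coordinate of
the first factor. -/
noncomputable def pd (j : Fin n) (f : Pt n → ℂ) (p : Pt n) : ℂ :=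
  fderiv ℂ f p (Pi.single j 1, 0)

/-- The Koszul differential `d_K : K^{-q} → K^{-q+1}`: contraction with
`Σ_i (z^i - ζ^i) ě^i`, i.e. `d_K(f e^I) = Σ_r (-1)^{r-1} (z^{i_r} - ζ^{i_r}) f e^{I_r}`. -/
noncomputable def dK (ω : Coeff n) : Coeff n := fun J p =>
  ∑ j ∈ Jᶜ, sgn n j J * ((p.1 j - p.2 j) * ω (insert j J) p)

/-- The homotopy operator `P : K^{-q} → K^{-q-1}`:
`P(f e^I) = Σ_j (∫₀¹ t^{|I|} (∂f/∂z^j)(ζ + t(z - ζ), ζ) dt) e^j ∧ e^I`. -/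
noncomputable def P (ω : Coeff n) : Coeff n := fun J p =>
  ∑ j ∈ J, sgn n j (J.erase j) *
    ∫ t in (0:ℝ)..1, (t : ℂ) ^ (J.card - 1) *
      pd n j (ω (J.erase j)) (p.2 + t • (p.1 - p.2), p.2)

/-- The operator `res`: zero on `K^{-q}` for `q ≥ 1`, and
`res(f)(z, ζ) = f(ζ, ζ)` for `f ∈ K^0`. -/
noncomputable def res (ω : Coeff n) : Coeff n := fun J p =>
  if J = ∅ then ω ∅ (p.2, p.2) else 0

/-- The element of `K^0 = O(U×U)` determined by a single function. -/
noncomputable def ofFun (f : Pt n → ℂ) : Coeff n := fun J p => if J = ∅ then f p else 0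

/-- `ω` is an element of `K^{-q}` over `U × U`: it is supported on
multi-indices of length `q` and its coefficients are holomorphic on `U × U`. -/
noncomputable def MemK (U : Set (Fin n → ℂ)) (q : ℕ) (ω : Coeff n) : Prop :=
  (∀ I : Finset (Fin n), I.card ≠ q → ω I = 0) ∧
  ∀ I : Finset (Fin n), DifferentiableOn ℂ (ω I) (U ×ˢ U)

end TwistedKoszul

namespace TwistedKoszul

section Aux

open MeasureTheory Metric Set Filter Topology

theorem param_diff {E : Type*} [NormedAddCommGroup E] [NormedSpace ℂ E] [FiniteDimensional ℂ E]
    {W : Set E} (hW : IsOpen W) {a b : ℝ} (hab : a ≤ b) (F : E → ℝ → ℂ)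
    (hc : ContinuousOn (fun x : E × ℝ => F x.1 x.2) (W ×ˢ Icc a b))
    (hd : ∀ t ∈ Icc a b, DifferentiableOn ℂ (fun x => F x t) W) :
    DifferentiableOn ℂ (fun x => ∫ t in a..b, F x t) W := by
  intro x₀ hx₀
  apply DifferentiableAt.differentiableWithinAt
  have hcx : ∀ x ∈ W, ContinuousOn (F x) (Icc a b) := fun x hx =>
    hc.comp (f := fun t => (x, t)) (by fun_prop) (fun t ht => ⟨hx, ht⟩)
  have hG : ∀ᶠ x in 𝓝 x₀, ∀ t ∈ Icc a b, t ∈ Icc a b → ‖F x t - F x₀ t‖ < 1 := by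
    apply isCompact_Icc.eventually_forall_of_forall_eventually
    intro t ht
    have h1 : ContinuousOn (fun x : E × ℝ => ‖F x.1 x.2 - F x₀ x.2‖) (W ×ˢ Icc a b) := by
      apply (hc.sub _).norm
      exact (hcx x₀ hx₀).comp (f := fun x : E × ℝ => x.2) (by fun_prop) (fun x hx => hx.2)
    have h2 := (h1 (x₀, t) ⟨hx₀, ht⟩).eventually (gt_mem_nhds (show _ < (1:ℝ) by simp))
    rw [eventually_nhdsWithin_iff] at h2
    have h3 : ∀ᶠ x : E × ℝ in 𝓝 (x₀, t), x.1 ∈ W :=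
      continuous_fst.continuousAt.eventually (hW.mem_nhds hx₀)
    filter_upwards [h2, h3] with x hx hx3 hx2
    exact hx ⟨hx3, hx2⟩
  obtain ⟨δ, hδ, hball⟩ := Metric.eventually_nhds_iff_ball.1 (hG.and (hW.mem_nhds hx₀))
  have hmeas : ∀ x ∈ W, AEStronglyMeasurable (F x) (volume.restrict (Ioc a b)) := fun x hx =>
    ((hcx x hx).aestronglyMeasurable measurableSet_Icc).mono_measure
      (Measure.restrict_mono Ioc_subset_Icc_self le_rfl)
  have hda : ∀ t ∈ Icc a b, HasFDerivAt (fun x => F x t) (fderiv ℂ (fun x => F x t) x₀) x₀ :=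
    fun t ht => ((hd t ht).differentiableAt (hW.mem_nhds hx₀)).hasFDerivAt
  have haeI : ∀ᵐ t ∂(volume.restrict (Ioc a b)), t ∈ Icc a b := by
    filter_upwards [ae_restrict_mem measurableSet_Ioc] with t ht using Ioc_subset_Icc_self ht
  have hv : ∀ v : E, AEStronglyMeasurable (fun t => fderiv ℂ (fun x => F x t) x₀ v)
      (volume.restrict (Ioc a b)) := by
    intro v
    have htend : Tendsto (fun m : ℕ => x₀ + ((m:ℂ))⁻¹ • v) atTop (𝓝 x₀) := by
      have := (tendsto_inv_atTop_nhds_zero_nat (𝕜 := ℂ)).smul_const v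
      simpa using this.const_add x₀
    obtain ⟨N, hN⟩ := eventually_atTop.1 (htend.eventually (hW.mem_nhds hx₀))
    refine aestronglyMeasurable_of_tendsto_ae (u := (atTop : Filter ℕ))
      (f := fun m t => ((m + N : ℕ) : ℂ) • (F (x₀ + ((m + N : ℕ) : ℂ)⁻¹ • v) t - F x₀ t)) ?_ ?_
    · intro m
      exact ((hmeas _ (hN (m+N) (by omega))).sub (hmeas _ hx₀)).const_smul ((m + N : ℕ) : ℂ)
    · filter_upwards [haeI] with t ht
      refine (hda t ht).lim v (c := fun m : ℕ => ((m + N : ℕ) : ℂ)) ?_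
      simp only [Complex.norm_natCast]
      exact tendsto_natCast_atTop_atTop.comp (tendsto_add_atTop_nat N)
  have hF' : AEStronglyMeasurable (fun t => fderiv ℂ (fun x => F x t) x₀)
      (volume.restrict (Ioc a b)) := by
    let B := Module.finBasis ℂ E
    have : (fun t => fderiv ℂ (fun x => F x t) x₀) = fun t =>
        ∑ i, (fderiv ℂ (fun x => F x t) x₀ (B i)) • (LinearMap.toContinuousLinearMap (B.coord i)) := by
      ext t v
      conv_lhs => rw [← B.sum_repr v, map_sum]
      simp only [map_smul, smul_eq_mul]
      simp [mul_comm]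
    rw [this]
    apply Finset.aestronglyMeasurable_fun_sum
    intro i _
    exact (hv (B i)).smul_const _
  have key := hasFDerivAt_integral_of_dominated_loc_of_lip' (μ := volume.restrict (Ioc a b))
    (F := F) (x₀ := x₀) (s := ball x₀ δ) (bound := fun _ => 1 / δ)
    (F' := fun t => fderiv ℂ (fun x => F x t) x₀) (𝕜 := ℂ) (ball_mem_nhds x₀ hδ)
    (fun x hx => hmeas x (hball x hx).2)
    (((hcx x₀ hx₀).integrableOn_Icc).mono_set Ioc_subset_Icc_self)
    hF' ?_ (integrable_const _) ?_
  · simp only [intervalIntegral.integral_of_le hab]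
    exact key.2.differentiableAt
  · filter_upwards [haeI] with t ht x hx
    rw [← dist_eq_norm, ← dist_eq_norm]
    refine Complex.dist_le_div_mul_dist_of_mapsTo_ball (f := fun x => F x t)
      ((hd t ht).mono fun y hy => (hball y hy).2) ?_ hx
    intro y hy
    rw [mem_closedBall, dist_eq_norm]
    exact ((hball y hy).1 t ht ht).le
  · filter_upwards [haeI] with t ht using hda t ht

theorem fderiv_apply_diff {E : Type*} [NormedAddCommGroup E] [NormedSpace ℂ E]
    [FiniteDimensional ℂ E]
    {W : Set E} (hW : IsOpen W) {f : E → ℂ} (hf : DifferentiableOn ℂ f W) (v : E) :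
    DifferentiableOn ℂ (fun x => fderiv ℂ f x v) W := by
  intro x₀ hx₀
  apply DifferentiableAt.differentiableWithinAt
  have h0 : Tendsto (fun q : E × ℂ => q.1 + q.2 • v) (𝓝 (x₀, 0)) (𝓝 x₀) := by
    have : Continuous (fun q : E × ℂ => q.1 + q.2 • v) := by fun_prop
    simpa using this.tendsto (x₀, 0)
  obtain ⟨δ, hδ, hball⟩ := Metric.eventually_nhds_iff_ball.1 (h0.eventually (hW.mem_nhds hx₀))
  have hin : ∀ x ∈ ball x₀ δ, ∀ w ∈ ball (0:ℂ) δ, x + w • v ∈ W := by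
    intro x hx w hw
    apply hball (x, w)
    rw [← ball_prod_same]; exact ⟨hx, hw⟩
  set r := δ / 2 with hr
  have hr0 : 0 < r := by positivity
  have hcirc : ∀ θ, circleMap 0 r θ ∈ ball (0:ℂ) δ := by
    intro θ; simp [abs_of_pos hr0]; linarith
  have hne : ∀ θ, circleMap 0 r θ ≠ 0 := fun θ => circleMap_ne_center hr0.ne'
  have hD : DifferentiableOn ℂ (fun x => ∫ θ in (0:ℝ)..(2 * Real.pi),
      deriv (circleMap 0 r) θ * (((circleMap 0 r θ) ^ 2)⁻¹ * f (x + circleMap 0 r θ • v)))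
      (ball x₀ δ) := by
    apply param_diff isOpen_ball (by positivity)
    · simp only [deriv_circleMap]
      have hcm : Continuous (circleMap 0 r) := continuous_circleMap 0 r
      refine ContinuousOn.mul (by fun_prop) (ContinuousOn.mul ?_ ?_)
      · exact (Continuous.inv₀ (by fun_prop) (fun x => pow_ne_zero 2 (hne _))).continuousOn
      · exact hf.continuousOn.comp (by fun_prop) (fun x hx => hin _ hx.1 _ (hcirc _))
    · intro t _
      refine DifferentiableOn.const_mul (DifferentiableOn.const_mul ?_ _) _
      exact hf.comp (by fun_prop) (fun x hx => hin _ hx _ (hcirc _))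
  have hEq : ∀ x ∈ ball x₀ δ, fderiv ℂ f x v = (2 * Real.pi * Complex.I : ℂ)⁻¹ *
      ∫ θ in (0:ℝ)..(2 * Real.pi),
      deriv (circleMap 0 r) θ * (((circleMap 0 r θ) ^ 2)⁻¹ * f (x + circleMap 0 r θ • v)) := by
    intro x hx
    have hxW : x ∈ W := by simpa using hin x hx 0 (mem_ball_self hδ)
    have h1 : HasDerivAt (fun w : ℂ => f (x + w • v)) (fderiv ℂ f x v) 0 := by
      have ha : HasFDerivAt f (fderiv ℂ f x) (x + (0:ℂ) • v) := by
        simpa using (hf.differentiableAt (hW.mem_nhds hxW)).hasFDerivAt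
      have hb : HasDerivAt (fun w : ℂ => x + w • v) v 0 := by
        simpa using ((hasDerivAt_id (0:ℂ)).smul_const v).const_add x
      exact ha.comp_hasDerivAt (0:ℂ) hb
    have hdd : DifferentiableOn ℂ (fun w : ℂ => f (x + w • v)) (ball 0 δ) :=
      hf.comp (by fun_prop) (fun w hw => hin _ hx _ hw)
    have h2 := Complex.cderiv_eq_deriv isOpen_ball hdd hr0 (closedBall_subset_ball (by linarith))
    rw [h1.deriv] at h2
    rw [← h2]
    simp [Complex.cderiv, circleIntegral]
  have := ((hD.differentiableAt (ball_mem_nhds x₀ hδ)).const_mul ((2 * Real.pi * Complex.I : ℂ)⁻¹))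
  refine this.congr_of_eventuallyEq ?_
  filter_upwards [ball_mem_nhds x₀ hδ] with x hx using hEq x hx

end Aux

theorem sgn_sq (n : ℕ) (j : Fin n) (I : Finset (Fin n)) : sgn n j I * sgn n j I = 1 := by
  unfold sgn; rw [← mul_pow]; simp

theorem sgn_insert (n : ℕ) (j a : Fin n) (I : Finset (Fin n)) (h : a ∉ I) :
    sgn n j (insert a I) = (if a < j then -1 else 1) * sgn n j I := by
  unfold sgn
  rw [Finset.filter_insert]
  split_ifs
  · rw [Finset.card_insert_of_notMem (by simp [h]), pow_succ]; ring
  · simp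

theorem sgn_swap (n : ℕ) (j k : Fin n) (I : Finset (Fin n)) (hj : j ∉ I) (hk : k ∉ I)
    (hjk : j ≠ k) :
    sgn n j (insert k I) * sgn n k (insert j I) = - (sgn n j I * sgn n k I) := by
  rw [sgn_insert n j k I hk, sgn_insert n k j I hj]
  rcases lt_or_gt_of_ne hjk with h | h
  · rw [if_neg h.not_gt, if_pos h]; ring
  · rw [if_pos h, if_neg h.not_gt]; ring

theorem alg (n : ℕ) (J : Finset (Fin n)) (hJ : 1 ≤ J.card) (D : Fin n → ℂ)
    (A : Fin n → Finset (Fin n) → ℂ) (W t : ℂ)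
    (h : ∀ k ∈ J, sgn n k (J.erase k) * W +
      ∑ j ∈ (J.erase k)ᶜ, sgn n j (J.erase k) * (t * D j * A k (insert j (J.erase k))) = 0) :
    ∑ j ∈ Jᶜ, sgn n j J * (D j * ∑ k ∈ insert j J, sgn n k ((insert j J).erase k) *
      (t ^ J.card * A k ((insert j J).erase k))) =
    J.card * t ^ (J.card - 1) * W + t ^ J.card * ∑ j, D j * A j J := by
  obtain ⟨q, hq⟩ : ∃ q, J.card = q + 1 := ⟨J.card - 1, by omega⟩
  have h1 : ∀ k ∈ J, W + t * D k * A k J = - ∑ j ∈ Jᶜ, sgn n k (J.erase k) *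
      (sgn n j (J.erase k) * (t * D j * A k (insert j (J.erase k)))) := by
    intro k hk
    have h2 := h k hk
    have hc : (J.erase k)ᶜ = insert k Jᶜ := by ext x; simp only [Finset.mem_compl, Finset.mem_erase, Finset.mem_insert]; tauto
    rw [hc, Finset.sum_insert (by simpa using hk), Finset.insert_erase hk] at h2
    have h3 := congrArg (fun x => sgn n k (J.erase k) * x) h2
    simp only [mul_zero, mul_add, Finset.mul_sum, ← mul_assoc (sgn n k (J.erase k)) (sgn n k (J.erase k)), sgn_sq, one_mul] at h3
    linear_combination h3
  have h4 : ∀ j ∈ Jᶜ, sgn n j J * (D j * ∑ k ∈ insert j J, sgn n k ((insert j J).erase k) *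
      (t ^ J.card * A k ((insert j J).erase k))) = t ^ J.card * (D j * A j J) -
      ∑ k ∈ J, t ^ q * (sgn n k (J.erase k) *
      (sgn n j (J.erase k) * (t * D j * A k (insert j (J.erase k))))) := by
    intro j hj
    rw [Finset.mem_compl] at hj
    rw [Finset.sum_insert hj, Finset.erase_insert hj, mul_add, mul_add, Finset.mul_sum,
      Finset.mul_sum, sub_eq_add_neg, ← Finset.sum_neg_distrib]
    congr 1
    · linear_combination (D j * t ^ J.card * A j J) * sgn_sq n j J
    · refine Finset.sum_congr rfl fun k hk => ?_
      have hjk : j ≠ k := fun e => hj (e ▸ hk)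
      have hs := sgn_swap n j k (J.erase k) (by simp [hj]) (by simp) hjk
      rw [Finset.insert_erase hk] at hs
      rw [Finset.erase_insert_of_ne hjk, hq, pow_succ]
      linear_combination (D j * t ^ q * t * A k (insert j (J.erase k))) * hs
  rw [Finset.sum_congr rfl h4, Finset.sum_sub_distrib, Finset.sum_comm (s := Jᶜ)]
  simp only [← Finset.mul_sum (a := t ^ q)] 
  have h5 : ∑ k ∈ J, t ^ q * ∑ j ∈ Jᶜ, (sgn n k (J.erase k) *
      (sgn n j (J.erase k) * (t * D j * A k (insert j (J.erase k))))) =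
      - ∑ k ∈ J, t ^ q * (W + t * D k * A k J) := by
    rw [← Finset.sum_neg_distrib]
    refine Finset.sum_congr rfl fun k hk => ?_
    rw [h1 k hk]; ring
  simp only [← Finset.mul_sum] at h5 ⊢
  rw [h5, Finset.sum_add_distrib, Finset.sum_const, ← Finset.sum_add_sum_compl J]
  simp only [mul_assoc, ← Finset.mul_sum, hq, nsmul_eq_mul, Nat.add_sub_cancel, pow_succ]
  ring

theorem seg_mem {n : ℕ} {U : Set (Fin n → ℂ)} (hUconv : Convex ℝ U) {p : Pt n} (hp : p ∈ U ×ˢ U)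
    {t : ℝ} (ht : t ∈ Set.Icc (0:ℝ) 1) :
    ((p.2 + t • (p.1 - p.2), p.2) : Pt n) ∈ U ×ˢ U :=
  ⟨hUconv.add_smul_sub_mem hp.2 hp.1 ht, hp.2⟩

theorem fderiv_sum_pd {n : ℕ} (f : Pt n → ℂ) (x : Pt n) (v : Fin n → ℂ) :
    fderiv ℂ f x (v, 0) = ∑ j, v j * pd n j f x := by
  have : ((v, 0) : Pt n) = ∑ j, v j • ((Pi.single j 1, 0) : Pt n) := by
    ext i
    · simp [Prod.fst_sum, Finset.sum_apply, Pi.single_apply]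
    · simp [Prod.snd_sum]
  rw [this, map_sum]
  simp only [map_smul, smul_eq_mul, pd]

theorem pd_diff {n : ℕ} {U : Set (Fin n → ℂ)} (hU : IsOpen U) {f : Pt n → ℂ}
    (hf : DifferentiableOn ℂ f (U ×ˢ U)) (j : Fin n) :
    DifferentiableOn ℂ (pd n j f) (U ×ˢ U) :=
  fderiv_apply_diff (hU.prod hU) hf _

theorem seg_cont {n : ℕ} {U : Set (Fin n → ℂ)} (hUconv : Convex ℝ U) {f : Pt n → ℂ}
    (hf : ContinuousOn f (U ×ˢ U)) {p : Pt n} (hp : p ∈ U ×ˢ U) :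
    ContinuousOn (fun t : ℝ => f (p.2 + t • (p.1 - p.2), p.2)) (Set.Icc 0 1) :=
  hf.comp (by fun_prop) (fun _ ht => seg_mem hUconv hp ht)

theorem ftc {n : ℕ} {U : Set (Fin n → ℂ)} (hU : IsOpen U) (hUconv : Convex ℝ U) {f : Pt n → ℂ}
    (hf : DifferentiableOn ℂ f (U ×ˢ U)) {p : Pt n} (hp : p ∈ U ×ˢ U) (q : ℕ) :
    ∫ t in (0:ℝ)..1, ((q : ℂ) * (t:ℂ) ^ (q - 1) * f (p.2 + t • (p.1 - p.2), p.2) +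
      (t:ℂ) ^ q * ∑ j, (p.1 j - p.2 j) * pd n j f (p.2 + t • (p.1 - p.2), p.2)) =
    f p - 0 ^ q * f (p.2, p.2) := by
  have h01 : Set.uIcc (0:ℝ) 1 = Set.Icc 0 1 := Set.uIcc_of_le zero_le_one
  rw [intervalIntegral.integral_eq_sub_of_hasDerivAt
    (f := fun t : ℝ => (t:ℂ) ^ q * f (p.2 + t • (p.1 - p.2), p.2))]
  · simp
  · intro t ht
    rw [h01] at ht
    have h1 : HasDerivAt (fun t : ℝ => (t:ℂ) ^ q) ((q : ℂ) * (t:ℂ) ^ (q - 1)) t := by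
      simpa using (hasDerivAt_pow q (t:ℂ)).comp_ofReal
    have h2 : HasDerivAt (fun t : ℝ => ((p.2 + t • (p.1 - p.2), p.2) : Pt n)) (p.1 - p.2, 0) t := by
      refine HasDerivAt.prodMk ?_ (hasDerivAt_const _ _)
      simpa using ((hasDerivAt_id t).smul_const (p.1 - p.2)).const_add p.2
    have h3 := (((hf.differentiableAt ((hU.prod hU).mem_nhds (seg_mem hUconv hp ht))).hasFDerivAt).restrictScalars ℝ).comp_hasDerivAt t h2
    have h4 := h1.mul h3
    simp only [ContinuousLinearMap.coe_restrictScalars', fderiv_sum_pd, Pi.sub_apply] at h4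
    exact h4
  · apply ContinuousOn.intervalIntegrable
    rw [h01]
    have h1 := seg_cont hUconv hf.continuousOn hp
    have h2 := fun j => seg_cont hUconv (pd_diff hU hf j).continuousOn hp
    have h3 : ∀ m : ℕ, ContinuousOn (fun t : ℝ => (t:ℂ) ^ m) (Set.Icc 0 1) := fun m =>
      (Complex.continuous_ofReal.pow m).continuousOn
    exact ((continuousOn_const.mul (h3 _)).mul h1).add ((h3 _).mul
      (continuousOn_finset_sum _ fun j _ => continuousOn_const.mul (h2 j)))

theorem closed_pd {n : ℕ} {U : Set (Fin n → ℂ)} (hU : IsOpen U) {ω : Coeff n}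
    (hω : ∀ I : Finset (Fin n), DifferentiableOn ℂ (ω I) (U ×ˢ U)) (I : Finset (Fin n))
    (hcl : ∀ p ∈ U ×ˢ U, dK n ω I p = 0) (k : Fin n) (hk : k ∉ I) {x : Pt n}
    (hx : x ∈ U ×ˢ U) :
    sgn n k I * ω (insert k I) x + ∑ j ∈ Iᶜ, sgn n j I * ((x.1 j - x.2 j) *
      pd n k (ω (insert j I)) x) = 0 := by
  have h1 : HasFDerivAt (dK n ω I) (0 : Pt n →L[ℂ] ℂ) x := by
    refine (hasFDerivAt_const (0:ℂ) x).congr_of_eventuallyEq ?_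
    filter_upwards [(hU.prod hU).mem_nhds hx] with y hy using hcl y hy
  have h2 : HasFDerivAt (dK n ω I) (∑ j ∈ Iᶜ, sgn n j I • ((x.1 j - x.2 j) •
      fderiv ℂ (ω (insert j I)) x + ω (insert j I) x •
      ((ContinuousLinearMap.proj j).comp (ContinuousLinearMap.fst ℂ (Fin n → ℂ) (Fin n → ℂ)) -
       (ContinuousLinearMap.proj j).comp (ContinuousLinearMap.snd ℂ (Fin n → ℂ) (Fin n → ℂ))))) x := by
    unfold dK
    refine HasFDerivAt.fun_sum fun j _ => ?_
    refine HasFDerivAt.const_mul (HasFDerivAt.mul ?_ ?_) _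
    · exact (ContinuousLinearMap.hasFDerivAt ((ContinuousLinearMap.proj j).comp (ContinuousLinearMap.fst ℂ (Fin n → ℂ) (Fin n → ℂ)) -
       (ContinuousLinearMap.proj j).comp (ContinuousLinearMap.snd ℂ (Fin n → ℂ) (Fin n → ℂ))) : _)
    · exact ((hω _).differentiableAt ((hU.prod hU).mem_nhds hx)).hasFDerivAt
  have h3 := congrArg (fun L : Pt n →L[ℂ] ℂ => L (Pi.single k 1, 0)) (h2.unique h1)
  simp only [_root_.sum_apply, _root_.smul_apply,
    _root_.add_apply, _root_.sub_apply, ContinuousLinearMap.comp_apply,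
    ContinuousLinearMap.proj_apply, ContinuousLinearMap.coe_fst', ContinuousLinearMap.coe_snd',
    _root_.zero_apply, smul_eq_mul, Pi.zero_apply, sub_zero, mul_add,
    Finset.sum_add_distrib, Pi.single_apply] at h3
  rw [add_comm] at h3
  simpa [hk, pd] using h3

theorem part_i {n : ℕ} {U : Set (Fin n → ℂ)} (hU : IsOpen U) (hUconv : Convex ℝ U)
    (q : ℕ) (hq : 1 ≤ q) (ω : Coeff n) (hω : MemK n U q ω)
    (hcl : ∀ J : Finset (Fin n), ∀ p ∈ U ×ˢ U, dK n ω J p = 0)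
    (J : Finset (Fin n)) (p : Pt n) (hp : p ∈ U ×ˢ U) : ω J p = dK n (P n ω) J p := by
  by_cases hJ : J.card = q
  · subst hJ
    have h01 : Set.uIcc (0:ℝ) 1 = Set.Icc 0 1 := Set.uIcc_of_le zero_le_one
    have h := ftc hU hUconv (hω.2 J) hp J.card
    rw [zero_pow (by omega), zero_mul, sub_zero] at h
    rw [← h]
    have hint : ∀ k I, IntervalIntegrable (fun t : ℝ => (t:ℂ) ^ J.card *
        pd n k (ω I) (p.2 + t • (p.1 - p.2), p.2)) MeasureTheory.volume 0 1 := by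
      intro k I
      apply ContinuousOn.intervalIntegrable
      rw [h01]
      have h2 := seg_cont hUconv (pd_diff hU (hω.2 I) k).continuousOn hp
      fun_prop
    have hR : dK n (P n ω) J p = ∫ t in (0:ℝ)..1, ∑ j ∈ Jᶜ, sgn n j J * ((p.1 j - p.2 j) *
        ∑ k ∈ insert j J, sgn n k ((insert j J).erase k) *
        ((t:ℂ) ^ J.card * pd n k (ω ((insert j J).erase k)) (p.2 + t • (p.1 - p.2), p.2))) := by
      rw [intervalIntegral.integral_finsetSum]
      · unfold dK P
        refine Finset.sum_congr rfl fun j hj => ?_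
        rw [Finset.mem_compl] at hj
        rw [intervalIntegral.integral_const_mul, intervalIntegral.integral_const_mul,
          intervalIntegral.integral_finsetSum]
        · simp only [intervalIntegral.integral_const_mul, Finset.card_insert_of_notMem hj,
            Nat.add_sub_cancel]
        · exact fun k _ => (hint _ _).const_mul _
      · intro j _
        refine IntervalIntegrable.const_mul (IntervalIntegrable.const_mul ?_ _) _
        have := IntervalIntegrable.sum (insert j J) (fun k _ =>
          (hint k ((insert j J).erase k)).const_mul (sgn n k ((insert j J).erase k)))
        simpa only [Finset.sum_fn] using this
    rw [hR]
    refine intervalIntegral.integral_congr fun t ht => ?_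
    rw [h01] at ht
    refine (alg n J hq (fun j => p.1 j - p.2 j)
      (fun k I => pd n k (ω I) (p.2 + t • (p.1 - p.2), p.2)) _ _ ?_).symm
    intro k hk
    have := closed_pd hU hω.2 (J.erase k) (hcl _) k (by simp) (seg_mem hUconv hp ht)
    rw [Finset.insert_erase hk] at this
    simpa using this
  · have hz : ∀ I : Finset (Fin n), I.card = J.card → ω I = 0 := fun I hI => hω.1 I (by omega)
    rw [hz J rfl]
    unfold dK P
    refine (Finset.sum_eq_zero fun j hj => ?_).symm
    rw [Finset.mem_compl] at hj
    rw [Finset.sum_eq_zero, mul_zero, mul_zero]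
    intro k hk
    rw [hz ((insert j J).erase k) (by rw [Finset.card_erase_of_mem hk, Finset.card_insert_of_notMem hj]; omega)]
    simp [pd]

theorem memK_P {n : ℕ} {U : Set (Fin n → ℂ)} (hU : IsOpen U) (hUconv : Convex ℝ U)
    (f : Pt n → ℂ) (hf : DifferentiableOn ℂ f (U ×ˢ U)) : MemK n U 1 (P n (ofFun n f)) := by
  have hof : ∀ I : Finset (Fin n), DifferentiableOn ℂ (ofFun n f I) (U ×ˢ U) := by
    intro I
    unfold ofFun
    by_cases hI : I = ∅
    · simpa [hI] using hf
    · simp [hI]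
  constructor
  · intro I hI
    ext p
    refine Finset.sum_eq_zero fun j hj => ?_
    have hne : I.erase j ≠ ∅ := by
      intro h
      apply hI
      have := Finset.card_erase_add_one hj
      rw [h] at this; simpa using this.symm
    have : ofFun n f (I.erase j) = 0 := by ext p; simp [ofFun, hne]
    rw [this]; simp [pd]
  · intro I
    unfold P
    refine DifferentiableOn.fun_sum fun j _ => DifferentiableOn.const_mul ?_ _
    apply param_diff (hU.prod hU) zero_le_one
    · refine ContinuousOn.mul (by fun_prop) ?_
      exact (pd_diff hU (hof _) j).continuousOn.comp (f := fun x : Pt n × ℝ =>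
        ((x.1.2 + x.2 • (x.1.1 - x.1.2), x.1.2) : Pt n)) (by fun_prop)
        (fun x hx => seg_mem hUconv hx.1 hx.2)
    · intro t ht
      refine DifferentiableOn.const_mul ?_ _
      exact (pd_diff hU (hof _) j).comp (f := fun x : Pt n =>
        ((x.2 + t • (x.1 - x.2), x.2) : Pt n)) (by fun_prop)
        (fun x hx => seg_mem hUconv hx ht)

theorem dK_P {n : ℕ} {U : Set (Fin n → ℂ)} (hU : IsOpen U) (hUconv : Convex ℝ U)
    (f : Pt n → ℂ) (hf : DifferentiableOn ℂ f (U ×ˢ U)) (hz : ∀ z ∈ U, f (z, z) = 0)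
    (p : Pt n) (hp : p ∈ U ×ˢ U) : dK n (P n (ofFun n f)) ∅ p = f p := by
  have h := ftc hU hUconv hf hp 0
  rw [hz p.2 hp.2, mul_zero, sub_zero] at h
  have h01 : Set.uIcc (0:ℝ) 1 = Set.Icc 0 1 := Set.uIcc_of_le zero_le_one
  simp only [Nat.cast_zero, zero_mul, zero_add, pow_zero, one_mul] at h
  rw [intervalIntegral.integral_finsetSum] at h
  · have he : ofFun n f ∅ = f := by ext; simp [ofFun]
    rw [← h]
    simp [dK, P, sgn, he, Finset.compl_empty]
  · intro j _
    refine IntervalIntegrable.const_mul ?_ _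
    apply ContinuousOn.intervalIntegrable
    rw [h01]
    exact seg_cont hUconv (pd_diff hU hf j).continuousOn hp

/-- The Koszul complex of global sections over `U × U` is a
resolution of `O(U)` via restriction to the diagonal:
(i) for `1 ≤ q ≤ n`, every `d_K`-closed `ω ∈ K^{-q}` satisfies `ω = d_K(P ω)`;
(ii) `f ∈ K^0` lies in the image of `d_K : K^{-1} → K^0` iff `f(z,z) = 0` on `U`;
(iii) the augmentation `K^0 → O(U)`, `f ↦ (z ↦ f(z,z))`, is surjective. -/
theorem statement2 (n : ℕ) (hn : 1 ≤ n)
    (U : Set (Fin n → ℂ)) (hUopen : IsOpen U) (hUconv : Convex ℝ U)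
    (hUne : U.Nonempty) :
    (∀ q : ℕ, 1 ≤ q → q ≤ n → ∀ ω : Coeff n, MemK n U q ω →
      (∀ J : Finset (Fin n), ∀ p ∈ U ×ˢ U, dK n ω J p = 0) →
      ∀ J : Finset (Fin n), ∀ p ∈ U ×ˢ U, ω J p = dK n (P n ω) J p) ∧
    (∀ f : Pt n → ℂ, DifferentiableOn ℂ f (U ×ˢ U) →
      ((∃ η : Coeff n, MemK n U 1 η ∧ ∀ p ∈ U ×ˢ U, dK n η ∅ p = f p) ↔
        ∀ z ∈ U, f (z, z) = 0)) ∧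
    (∀ g : (Fin n → ℂ) → ℂ, DifferentiableOn ℂ g U →
      ∃ f : Pt n → ℂ, DifferentiableOn ℂ f (U ×ˢ U) ∧ ∀ z ∈ U, f (z, z) = g z) := by
  refine ⟨fun q hq _ ω hω hcl J p hp => part_i hUopen hUconv q hq ω hω hcl J p hp, ?_, ?_⟩
  · intro f hf
    constructor
    · rintro ⟨η, -, h⟩ z hz
      rw [← h (z, z) ⟨hz, hz⟩]
      simp [dK]
    · intro hz
      exact ⟨P n (ofFun n f), memK_P hUopen hUconv f hf, dK_P hUopen hUconv f hf hz⟩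
  · intro g hg
    exact ⟨fun p => g p.1, hg.comp (by fun_prop) (fun p hp => hp.1), fun z _ => rfl⟩

end TwistedKoszul
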